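/- Let P ∈ S be a point with φ_P(Δ_P) = {i,j}, i ≠ j, and let α,β ∈ A¹ satisfy α∧β = 0 in A²_{W,k}. Then either α_i·β_j − α_j·β_i = 0 in k, or μ_P(δ,j) = 0 in k for every δ ∈ φ_P^{-1}(i) and μ_P(δ′,i) = 0 in k for every δ′ ∈ φ_P^{-1}(j). -/

import Mathlib

/-!
Fix a branch `δ` at `P`. The alternating form `(v, w) ↦ v_δ (∑ w) - (∑ v) w_δ` on `A_P` takes the
value `[a = δ] - [b = δ]` on `ψ_P^a ∧ ψ_P^b`, hence kills all the cyclic relations spanning `I_P`.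
When the branches at `P` lie on at least two components there are no other relations, so the form
descends to a functional on `(Λ² A_P) / I_P` (`branchForm_eq_zero`). Evaluated on the `P`-component
of `α ∧ β` it gives `∑_b (α_{φ(δ)} β_{φ(b)} - α_{φ(b)} β_{φ(δ)}) μ_P(δ, b)`, which therefore
vanishes (`resonance_of_wedge_eq_zero`). If `φ_P(Δ_P) = {i, j}` and `φ_P(δ) = i`, only the branches
`b` of `j` contribute, and the sum is `(α_i β_j - α_j β_i) μ_P(δ, j)`. As `ZMod p` is a field, one
of the two factors is zero.
-/

open scoped Classical

/-- The weak combinatorial type of a plane projective curve. -/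
structure WeakComb (p : ℕ) where
  /-- the set of irreducible components -/
  C : Type
  [fintypeC : Fintype C]
  [decEqC : DecidableEq C]
  [nonemptyC : Nonempty C]
  /-- the set of singular points -/
  S : Type
  [fintypeS : Fintype S]
  [decEqS : DecidableEq S]
  /-- the local branches at each singular point -/
  Δ : S → Type
  [fintypeΔ : ∀ P, Fintype (Δ P)]
  [decEqΔ : ∀ P, DecidableEq (Δ P)]
  /-- each branch belongs to a component -/
  φ : ∀ P, Δ P → C
  /-- local intersection multiplicities of pairs of branches -/
  μ : ∀ P, Δ P → Δ P → ℕ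
  μ_symm : ∀ P δ δ', φ P δ ≠ φ P δ' → μ P δ δ' = μ P δ' δ
  μ_pos : ∀ P δ δ', φ P δ ≠ φ P δ' → 0 < μ P δ δ'

attribute [instance] WeakComb.fintypeC WeakComb.decEqC WeakComb.nonemptyC
attribute [instance] WeakComb.fintypeS WeakComb.decEqS WeakComb.fintypeΔ WeakComb.decEqΔ

namespace WeakComb

variable {p : ℕ} (W : WeakComb p)

/-- μ_P(δ,δ') with the convention that it vanishes on pairs of branches of the same component. -/
def muk (P : W.S) (δ δ' : W.Δ P) : ℕ :=
  if W.φ P δ = W.φ P δ' then 0 else W.μ P δ δ'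

/-- μ_P(δ, j): the multiplicity of intersection of the branch δ with the component j. -/
def muC (P : W.S) (δ : W.Δ P) (j : W.C) : ℕ :=
  ∑ δ' : W.Δ P, if W.φ P δ' = j then W.muk P δ δ' else 0

/-- A degree assignment: positive degrees satisfying the Bezout condition. -/
def IsDegree (d : W.C → ℕ) : Prop :=
  (∀ i, 0 < d i) ∧
  ∀ i j, i ≠ j →
    d i * d j = ∑ P : W.S, ∑ δ : W.Δ P, if W.φ P δ = i then W.muC P δ j else 0

/-- The basis vector σ_i of A¹ = (C → ZMod p). -/
noncomputable def sigma (i : W.C) : W.C → ZMod p := Pi.single i 1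

/-- The basis vector ψ_P^δ of A_P = (Δ_P → ZMod p). -/
noncomputable def psi (P : W.S) (δ : W.Δ P) : W.Δ P → ZMod p := Pi.single δ 1

/-- ψ_P^δ ∧ ψ_P^δ' as an element of Λ² A_P. -/
noncomputable def psiW (P : W.S) (δ δ' : W.Δ P) : ⋀[ZMod p]^2 (W.Δ P → ZMod p) :=
  ⟨ExteriorAlgebra.ιMulti (ZMod p) 2 ![W.psi P δ, W.psi P δ'],
   ExteriorAlgebra.ιMulti_range (ZMod p) 2 (Set.mem_range_self _)⟩

/-- The subspace I_P of Λ² A_P. -/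
noncomputable def IP (P : W.S) : Submodule (ZMod p) (⋀[ZMod p]^2 (W.Δ P → ZMod p)) :=
  Submodule.span (ZMod p)
    ({x | ∃ δ1 δ2 δ3 : W.Δ P, x = W.psiW P δ1 δ2 + W.psiW P δ2 δ3 + W.psiW P δ3 δ1} ∪
     {x | (∀ δ δ' : W.Δ P, W.φ P δ = W.φ P δ') ∧ ∃ δ1 δ2 : W.Δ P, x = W.psiW P δ1 δ2})

/-- The degree-two part A² = A^{2,0} ⊕ A^{2,∞} of the Combinatorial Aomoto algebra. -/
abbrev A2 (d : W.C → ℕ) : Type :=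
  ((P : W.S) → (⋀[ZMod p]^2 (W.Δ P → ZMod p)) ⧸ W.IP P) ×
  ({i : W.C // p ∣ d i} → ZMod p)

/-- The wedge product A¹ × A¹ → A², extending σ_i ∧ σ_j bilinearly. -/
noncomputable def wedge (d : W.C → ℕ) (α β : W.C → ZMod p) : W.A2 d :=
  (fun P => ∑ δ : W.Δ P, ∑ δ' : W.Δ P,
      (α (W.φ P δ) * β (W.φ P δ') * (W.muk P δ δ' : ZMod p)) •
        Submodule.Quotient.mk (W.psiW P δ δ'),
   fun i => α i.1 * (∑ j : W.C, (d j : ZMod p) * β j)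
          - β i.1 * (∑ j : W.C, (d j : ZMod p) * α j))

/-- The linear map ·∧α : A¹ → A², β ↦ β ∧ α. -/
noncomputable def wedgeL (d : W.C → ℕ) (α : W.C → ZMod p) :
    (W.C → ZMod p) →ₗ[ZMod p] W.A2 d where
  toFun β := W.wedge d β α
  map_add' β γ := by
    refine Prod.ext ?_ ?_
    · funext P
      simp only [wedge, Pi.add_apply, Prod.fst_add]
      rw [← Finset.sum_add_distrib]
      refine Finset.sum_congr rfl fun δ _ => ?_
      rw [← Finset.sum_add_distrib]
      refine Finset.sum_congr rfl fun δ' _ => ?_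
      rw [← add_smul, add_mul, add_mul]
    · funext i
      simp only [wedge, Pi.add_apply, Prod.snd_add]
      rw [show (∑ x : W.C, (d x : ZMod p) * (β x + γ x))
            = (∑ x : W.C, (d x : ZMod p) * β x) + ∑ x : W.C, (d x : ZMod p) * γ x by
        rw [← Finset.sum_add_distrib]; exact Finset.sum_congr rfl fun x _ => by ring]
      ring
  map_smul' c β := by
    refine Prod.ext ?_ ?_
    · funext P
      simp only [wedge, Pi.smul_apply, smul_eq_mul, RingHom.id_apply, Prod.smul_fst]
      rw [Finset.smul_sum]
      refine Finset.sum_congr rfl fun δ _ => ?_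
      rw [Finset.smul_sum]
      refine Finset.sum_congr rfl fun δ' _ => ?_
      rw [smul_smul]
      ring_nf
    · funext i
      simp only [wedge, Pi.smul_apply, smul_eq_mul, RingHom.id_apply, Prod.smul_snd]
      rw [show (∑ x : W.C, (d x : ZMod p) * (c * β x)) = c * ∑ x : W.C, (d x : ZMod p) * β x by
        rw [Finset.mul_sum]; exact Finset.sum_congr rfl fun x _ => by ring]
      ring

/-- The kernel of ·∧α : A¹ → A². -/
noncomputable def wedgeKer (d : W.C → ℕ) (α : W.C → ZMod p) :
    Submodule (ZMod p) (W.C → ZMod p) :=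
  LinearMap.ker (W.wedgeL d α)

/-- H¹ of the Combinatorial Aomoto complex with differential ·∧α. -/
noncomputable abbrev H1 (d : W.C → ℕ) (α : W.C → ZMod p) :=
  (W.wedgeKer d α) ⧸
    (Submodule.comap (W.wedgeKer d α).subtype (Submodule.span (ZMod p) {α}))

end WeakComb

namespace WeakComb

variable {p : ℕ} (W : WeakComb p)

/-- The resonance condition for (α,β) at the branch δ of the point P. -/
def ResCond (α β : W.C → ZMod p) (P : W.S) (δ : W.Δ P) : Prop :=
  β (W.φ P δ) * (∑ j : W.C, (W.muC P δ j : ZMod p) * α j)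
    - α (W.φ P δ) * (∑ j : W.C, (W.muC P δ j : ZMod p) * β j) = 0

/-- P is a p-transversal point for the pair of components i ≠ j. -/
def PTransPoint (P : W.S) (i j : W.C) : Prop :=
  i ≠ j ∧ (∀ δ : W.Δ P, W.φ P δ = i ∨ W.φ P δ = j) ∧
  (∃ δ : W.Δ P, W.φ P δ = i) ∧ (∃ δ : W.Δ P, W.φ P δ = j) ∧
  ((∃ δ : W.Δ P, W.φ P δ = i ∧ ((W.muC P δ j : ZMod p) ≠ 0)) ∨
   (∃ δ : W.Δ P, W.φ P δ = j ∧ ((W.muC P δ i : ZMod p) ≠ 0)))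

/-- The components i and j are p-transversal at a point. -/
def PTransComponents (i j : W.C) : Prop := ∃ P : W.S, W.PTransPoint P i j

/-- α is non-coordinate if all its coordinates are nonzero. -/
def NonCoordinate (α : W.C → ZMod p) : Prop := ∀ i, α i ≠ 0

end WeakComb

/-- The setoid (partition) obtained from s by merging the classes of c₀ and c₁. -/
def mergeSetoid {α : Type*} (s : Setoid α) (c₀ c₁ : α) : Setoid α :=
  Relation.EqvGen.setoid (fun a b => s.r a b ∨ (a = c₀ ∧ b = c₁))

namespace WeakComb

variable {p : ℕ} (W : WeakComb p)

/-- W is p-transversal at P with respect to (α, π), where the surjection π is encoded by the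
setoid s of its fibres; the two classes π(φ_P(Δ_P)) = {i',j'} are those of c₀ and c₁. -/
def PTransversalAt (α : W.C → ZMod p) (s : Setoid W.C) (P : W.S) (c₀ c₁ : W.C) : Prop :=
  ¬ s.r c₀ c₁ ∧
  (∀ δ : W.Δ P, s.r (W.φ P δ) c₀ ∨ s.r (W.φ P δ) c₁) ∧
  (∃ δ : W.Δ P, s.r (W.φ P δ) c₀) ∧ (∃ δ : W.Δ P, s.r (W.φ P δ) c₁) ∧
  ∃ δ : W.Δ P, s.r (W.φ P δ) c₀ ∧
    (∑ δ' : W.Δ P, if s.r (W.φ P δ') c₁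
        then (W.muk P δ δ' : ZMod p) * α (W.φ P δ') else 0) ≠ 0

/-- A p-reduction step with respect to α. -/
def RedStep (α : W.C → ZMod p) (s s' : Setoid W.C) : Prop :=
  ∃ (P : W.S) (c₀ c₁ : W.C), W.PTransversalAt α s P c₀ c₁ ∧ s' = mergeSetoid s c₀ c₁

/-- W is completely p-reductive with respect to α: starting from the identity partition (⊥),
some finite sequence of p-reduction steps reaches the one-class partition (⊤). -/
def CompletelyPReductive (α : W.C → ZMod p) : Prop :=
  Relation.ReflTransGen (W.RedStep α) ⊥ ⊤

/-- β is π-proportional to α, for the surjection π encoded by the setoid s: on each class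
of s, β is a scalar multiple of α. -/
def Proportional (s : Setoid W.C) (α β : W.C → ZMod p) : Prop :=
  ∀ c : W.C, ∃ l : ZMod p, ∀ c', s.r c c' → β c' = l * α c'

end WeakComb

/-- A combinatorial quasi-fiber structure of rank r on W. -/
structure QuasiFiber {p : ℕ} (W : WeakComb p) (r : ℕ) where
  /-- which quasi-fiber each component belongs to -/
  g : W.C → Fin r
  g_surj : Function.Surjective g
  /-- multiplicities of components inside the quasi-fibers -/
  m : W.C → ℕ
  m_pos : ∀ c, 0 < m c
  /-- the set of base points -/
  B : Set W.S
  fiber_off_base : ∀ P : W.S, P ∉ B → ∀ δ δ' : W.Δ P, g (W.φ P δ) = g (W.φ P δ')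

namespace WeakComb

variable {p : ℕ} (W : WeakComb p) {r : ℕ}

/-- M_s(δ) for a branch δ at a base point P. -/
noncomputable def Mcoef (F : QuasiFiber W r) (P : W.S) (δ : W.Δ P) (s : Fin r) : ZMod p :=
  ∑ δ' : W.Δ P,
    if W.φ P δ' ≠ W.φ P δ ∧ F.g (W.φ P δ') = s
      then ((F.m (W.φ P δ') * W.μ P δ δ' : ℕ) : ZMod p) else 0

/-- ω_a = Σ_c m_c · a_{g(c)} · σ_c ∈ A¹. -/
noncomputable def omega (F : QuasiFiber W r) (a : Fin r → ZMod p) : W.C → ZMod p :=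
  fun c => (F.m c : ZMod p) * a (F.g c)

/-- The restricted combinatorics W°_s of the quasi-fiber s. -/
noncomputable def restrict (F : QuasiFiber W r) (s : Fin r) : WeakComb p where
  C := {c : W.C // F.g c = s}
  fintypeC := Fintype.ofFinite _
  decEqC := inferInstance
  nonemptyC := by obtain ⟨c, hc⟩ := F.g_surj s; exact ⟨⟨c, hc⟩⟩
  S := {P : W.S // Nonempty (W.Δ P) ∧ ∀ δ : W.Δ P, F.g (W.φ P δ) = s}
  fintypeS := Fintype.ofFinite _
  decEqS := inferInstance
  Δ := fun P => W.Δ P.1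
  fintypeΔ := fun P => inferInstance
  decEqΔ := fun P => inferInstance
  φ := fun P δ => ⟨W.φ P.1 δ, P.2.2 δ⟩
  μ := fun P δ δ' => W.μ P.1 δ δ'
  μ_symm := fun P δ δ' h => W.μ_symm P.1 δ δ' (fun e => h (Subtype.ext e))
  μ_pos := fun P δ δ' h => W.μ_pos P.1 δ δ' (fun e => h (Subtype.ext e))

/-- The restriction ω_a|_s of ω_a to the restricted combinatorics W°_s. -/
noncomputable def omegaRes (F : QuasiFiber W r) (a : Fin r → ZMod p) (s : Fin r) :
    (W.restrict F s).C → ZMod p :=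
  fun c => (F.m c.1 : ZMod p) * a s

end WeakComb

namespace WeakComb

variable {p : ℕ} (W : WeakComb p)

/-- The functional on `Λ² A_P` sending `v ∧ w` to `v_δ (∑ w) - (∑ v) w_δ`, constructed as the
determinant of the pair of linear forms `(v ↦ v_δ, v ↦ ∑ v)`. -/
noncomputable def branchForm (P : W.S) (δ : W.Δ P) :
    ⋀[ZMod p]^2 (W.Δ P → ZMod p) →ₗ[ZMod p] ZMod p :=
  exteriorPower.alternatingMapLinearEquiv
    ((Matrix.detRowAlternating (R := ZMod p) (n := Fin 2)).compLinearMap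
      (LinearMap.pi ![LinearMap.proj δ, ∑ a : W.Δ P, LinearMap.proj a]))

lemma branchForm_psiW (P : W.S) (δ a b : W.Δ P) :
    W.branchForm P δ (W.psiW P a b) = (if a = δ then 1 else 0) - (if b = δ then 1 else 0) := by
  have h : W.psiW P a b = exteriorPower.ιMulti (ZMod p) 2 ![W.psi P a, W.psi P b] := rfl
  rw [h, branchForm, exteriorPower.alternatingMapLinearEquiv_apply_ιMulti]
  refine (Matrix.det_fin_two _).trans ?_
  simp [psi, Pi.single_apply, eq_comm (a := δ)]

/-- If the branches at `P` lie on at least two components, `branchForm` vanishes on `I_P`. -/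
lemma branchForm_eq_zero (P : W.S) (δ : W.Δ P) (hP : ∃ a b : W.Δ P, W.φ P a ≠ W.φ P b)
    {x : ⋀[ZMod p]^2 (W.Δ P → ZMod p)} (hx : x ∈ W.IP P) : W.branchForm P δ x = 0 := by
  suffices h : W.IP P ≤ LinearMap.ker (W.branchForm P δ) from h hx
  refine Submodule.span_le.2 ?_
  rintro y (⟨a, b, c, rfl⟩ | ⟨hall, -⟩)
  · simp only [SetLike.mem_coe, LinearMap.mem_ker, map_add, branchForm_psiW]
    ring
  · obtain ⟨a, b, hab⟩ := hP
    exact absurd (hall a b) hab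

lemma muk_comm (P : W.S) (a b : W.Δ P) : W.muk P a b = W.muk P b a := by
  unfold muk
  by_cases h : W.φ P a = W.φ P b
  · rw [if_pos h, if_pos h.symm]
  · rw [if_neg h, if_neg (Ne.symm h), W.μ_symm P a b h]

/-- The resonance condition at a branch `δ`, as a sum over the branches at `P`. -/
lemma resonance_of_wedge_eq_zero (d : W.C → ℕ) (P : W.S) (δ : W.Δ P)
    (hP : ∃ a b : W.Δ P, W.φ P a ≠ W.φ P b) (α β : W.C → ZMod p) (h : W.wedge d α β = 0) :
    ∑ b : W.Δ P, (α (W.φ P δ) * β (W.φ P b) - α (W.φ P b) * β (W.φ P δ)) *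
      (W.muk P δ b : ZMod p) = 0 := by
  have hwP := congrFun (congrArg Prod.fst h) P
  have hmem : (∑ a : W.Δ P, ∑ b : W.Δ P,
      (α (W.φ P a) * β (W.φ P b) * (W.muk P a b : ZMod p)) • W.psiW P a b) ∈ W.IP P := by
    rw [← Submodule.Quotient.mk_eq_zero, ← Submodule.mkQ_apply]
    simp only [map_sum, map_smul]
    exact hwP
  have h0 := W.branchForm_eq_zero P δ hP hmem
  simp only [map_sum, map_smul, branchForm_psiW, smul_eq_mul, mul_sub, Finset.sum_sub_distrib,
    mul_ite, mul_one, mul_zero] at h0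
  -- collapse the two double sums onto `a = δ` and `b = δ`
  rw [Finset.sum_comm] at h0
  simp only [Finset.sum_ite_eq', Finset.mem_univ, if_true] at h0
  rw [← h0, ← Finset.sum_sub_distrib]
  refine Finset.sum_congr rfl fun b _ => ?_
  rw [W.muk_comm P b δ]
  ring

/-- At a point with branches on exactly the two components `i` and `j`, the resonance condition
at a branch `δ` of `i` is `(α_i β_j - α_j β_i) μ_P(δ, j) = 0`. -/
lemma minor_mul_muC_eq_zero (d : W.C → ℕ) (P : W.S) (i j : W.C)
    (him : ∀ δ : W.Δ P, W.φ P δ = i ∨ W.φ P δ = j)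
    (hP : ∃ a b : W.Δ P, W.φ P a ≠ W.φ P b) (α β : W.C → ZMod p) (h : W.wedge d α β = 0)
    (δ : W.Δ P) (hδ : W.φ P δ = i) :
    (α i * β j - α j * β i) * (W.muC P δ j : ZMod p) = 0 := by
  rw [← W.resonance_of_wedge_eq_zero d P δ hP α β h, muC, Nat.cast_sum, Finset.mul_sum]
  refine Finset.sum_congr rfl fun b _ => ?_
  by_cases hb : W.φ P b = j
  · rw [if_pos hb, hδ, hb]
  · have hbi : W.φ P b = i := (him b).resolve_right hb
    -- `b` and `δ` are both branches of `i`, so `muk P δ b` is zero by convention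
    have hmuk : W.muk P δ b = 0 := if_pos (hδ.trans hbi.symm)
    simp [hb, hmuk]

end WeakComb

section Statements

open WeakComb

variable {p : ℕ} [Fact p.Prime]

/-- Corollary `double_points`. -/
theorem stmt2 (W : WeakComb p) (d : W.C → ℕ) (hd : W.IsDegree d)
    (P : W.S) (i j : W.C) (hij : i ≠ j)
    (him : ∀ δ : W.Δ P, W.φ P δ = i ∨ W.φ P δ = j)
    (hi : ∃ δ : W.Δ P, W.φ P δ = i) (hj : ∃ δ : W.Δ P, W.φ P δ = j)
    (α β : W.C → ZMod p) (h : W.wedge d α β = 0) :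
    α i * β j - α j * β i = 0 ∨
    ((∀ δ : W.Δ P, W.φ P δ = i → (W.muC P δ j : ZMod p) = 0) ∧
     (∀ δ : W.Δ P, W.φ P δ = j → (W.muC P δ i : ZMod p) = 0)) := by
  have hP : ∃ a b : W.Δ P, W.φ P a ≠ W.φ P b := by
    obtain ⟨a, ha⟩ := hi
    obtain ⟨b, hb⟩ := hj
    exact ⟨a, b, by rwa [ha, hb]⟩
  by_cases hm : α i * β j - α j * β i = 0
  · exact Or.inl hm
  refine Or.inr ⟨fun δ hδ => ?_, fun δ hδ => ?_⟩
  · exact (mul_eq_zero.1 (W.minor_mul_muC_eq_zero d P i j him hP α β h δ hδ)).resolve_left hm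
  · have h0 := W.minor_mul_muC_eq_zero d P j i (fun δ => (him δ).symm) hP α β h δ hδ
    refine (mul_eq_zero.1 h0).resolve_left fun h1 => hm ?_
    linear_combination -h1

end Statements
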